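/- If two finite simplicial complexes triangulate homeomorphic compact surfaces, then they have the same alternating sum n₀ - n₁ + n₂. -/

import Mathlib

open Geometry

/-- The number of `i`-dimensional simplices (faces with `i + 1` vertices) in a set of faces. -/
noncomputable def faceCount {α : Type*} (F : Set (Finset α)) (i : ℕ) : ℕ :=
  {s ∈ F | s.card = i + 1}.ncard

/-!
The alternating sum of the face numbers is the Euler characteristic of the Alexander–Spanier
cohomology of the underlying space, which refers only to the topology. A cochain is a function of
finitely many points, and the cohomology of a subset `A` is that of the germs of cochains along the
diagonal of `A`. In a completely normal space the cochains vanishing near `A ∩ B` are the sums of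
those vanishing near `A` and near `B`, so Mayer–Vietoris for two closed sets reduces to a count of
lengths of submodules, and the Euler characteristic is additive.

A compact set that maps injectively onto a convex subset of `ℝⁿ` is acyclic: the level sets of the
last coordinate are acyclic by induction, a primitive near one level set is a primitive over a whole
strip around it, and primitives over adjacent strips glue because their common level set is acyclic.
Hence each closed simplex has Euler characteristic `1`. Removing a facet `s` from a complex leaves a
complex that meets `s` in a complex with fewer faces, and additivity computes the Euler
characteristic of the whole by induction on the number of faces.
-/

open Set Filter Topology

section RelativeLength

variable {R V : Type*} [Ring R] [AddCommGroup V] [Module R V]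

/-- The length of `(P + Q) / P`, that is, of `Q / P` when `P ≤ Q`. -/
noncomputable def relLength (P Q : Submodule R V) : ℕ∞ :=
  Module.length R (Q.map P.mkQ)

theorem length_map_eq_length_map {V₁ V₂ : Type*} [AddCommGroup V₁] [Module R V₁]
    [AddCommGroup V₂] [Module R V₂] {f : V →ₗ[R] V₁} {g : V →ₗ[R] V₂} {Q : Submodule R V}
    (hfg : ∀ x ∈ Q, f x = 0 ↔ g x = 0) :
    Module.length R (Q.map f) = Module.length R (Q.map g) := by
  have hker : LinearMap.ker (f.domRestrict Q) = LinearMap.ker (g.domRestrict Q) := by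
    ext x
    exact hfg x x.2
  rw [← LinearMap.range_domRestrict, ← LinearMap.range_domRestrict]
  exact ((LinearMap.quotKerEquivRange _).symm.trans ((Submodule.quotEquivOfEq _ _ hker).trans
    (LinearMap.quotKerEquivRange _))).length_eq

theorem relLength_eq_zero_iff {P Q : Submodule R V} : relLength P Q = 0 ↔ Q ≤ P := by
  rw [relLength, Module.length_eq_zero_iff, Submodule.subsingleton_iff_eq_bot,
    ← LinearMap.le_ker_iff_map, Submodule.ker_mkQ]

theorem relLength_bot_top : relLength (⊥ : Submodule R V) ⊤ = Module.length R V := by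
  rw [relLength, Submodule.map_top, Submodule.range_mkQ, Module.length_top]
  exact (Submodule.quotEquivOfEqBot ⊥ rfl).length_eq

theorem relLength_add_relLength {P Q S : Submodule R V} (hPQ : P ≤ Q) (hQS : Q ≤ S) :
    relLength P Q + relLength Q S = relLength P S := by
  have hmaps : ∀ x ∈ S.map P.mkQ, P.mapQ Q LinearMap.id hPQ x ∈ S.map Q.mkQ := by
    rintro _ ⟨x, hx, rfl⟩
    exact ⟨x, hx, rfl⟩
  refine (Module.length_eq_add_of_exact (Submodule.inclusion (Submodule.map_mono hQS))
    ((P.mapQ Q LinearMap.id hPQ).restrict hmaps) (Submodule.inclusion_injective _) ?_ ?_).symm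
  · rintro ⟨_, x, hx, rfl⟩
    exact ⟨⟨P.mkQ x, x, hx, rfl⟩, rfl⟩
  · rintro ⟨_, x, hx, rfl⟩
    have hker : (P.mapQ Q LinearMap.id hPQ).restrict hmaps ⟨P.mkQ x, x, hx, rfl⟩ = 0 ↔ x ∈ Q := by
      rw [← Submodule.Quotient.mk_eq_zero Q, Subtype.ext_iff]
      rfl
    rw [hker]
    constructor
    · exact fun hxQ => ⟨⟨P.mkQ x, x, hxQ, rfl⟩, rfl⟩
    · rintro ⟨⟨_, y, hy, rfl⟩, hyx⟩
      have hsub : y - x ∈ P := (Submodule.Quotient.eq P).1 (congrArg Subtype.val hyx)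
      simpa using Q.sub_mem hy (hPQ hsub)

theorem relLength_inf_left (P Q : Submodule R V) : relLength (P ⊓ Q) Q = relLength P Q :=
  length_map_eq_length_map fun x hx => by simp [hx]

theorem relLength_sup_right (P Q : Submodule R V) : relLength P (P ⊔ Q) = relLength P Q := by
  rw [relLength, Submodule.map_sup, Submodule.mkQ_map_self, bot_sup_eq, relLength]

theorem relLength_inf_eq_relLength_sup (P Q : Submodule R V) :
    relLength (P ⊓ Q) Q = relLength P (P ⊔ Q) :=
  (relLength_inf_left P Q).trans (relLength_sup_right P Q).symm

theorem relLength_map {W : Type*} [AddCommGroup W] [Module R W] (f : V →ₗ[R] W)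
    {P : Submodule R V} (hP : LinearMap.ker f ≤ P) (Q : Submodule R V) :
    relLength (P.map f) (Q.map f) = relLength P Q := by
  rw [relLength, ← Submodule.map_comp]
  refine length_map_eq_length_map fun x _ => ?_
  have hcomap : f x ∈ P.map f ↔ x ∈ P := by
    rw [← Submodule.mem_comap, Submodule.comap_map_eq, sup_eq_left.2 hP]
  simpa using hcomap

theorem relLength_eq_inf_add_sup {P Q : Submodule R V} (hPQ : P ≤ Q) (S : Submodule R V) :
    relLength P Q = relLength (P ⊓ S) (Q ⊓ S) + relLength (P ⊔ S) (Q ⊔ S) := by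
  have hinf : relLength (P ⊓ S) (Q ⊓ S) = relLength P (P ⊔ Q ⊓ S) := by
    rw [← relLength_inf_eq_relLength_sup, ← inf_assoc, inf_eq_left.2 hPQ]
  have hsup : relLength (P ⊔ Q ⊓ S) Q = relLength (P ⊔ S) (Q ⊔ S) := by
    have := relLength_inf_eq_relLength_sup (P ⊔ S) Q
    rwa [sup_inf_assoc_of_le S hPQ, inf_comm S Q, sup_right_comm, sup_eq_right.2 hPQ] at this
  rw [hinf, ← hsup, relLength_add_relLength le_sup_left (sup_le hPQ inf_le_left)]

theorem relLength_add_relLength_eq_inf_add_sup {P Q P' Q' : Submodule R V}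
    (hPQ : P ≤ Q) (hPQ' : P' ≤ Q') :
    relLength P Q + relLength P' Q' =
      relLength (P ⊓ P') (Q ⊓ Q') + relLength (P ⊔ P') (Q ⊔ Q') := by
  rw [relLength_eq_inf_add_sup hPQ P', relLength_eq_inf_add_sup hPQ' Q,
    ← relLength_add_relLength (inf_le_inf_right P' hPQ) (inf_le_inf_left Q hPQ'),
    ← relLength_add_relLength (sup_le_sup_right hPQ P') (sup_le_sup_left hPQ' Q),
    inf_comm P' Q, inf_comm Q' Q, sup_comm P' Q, sup_comm Q' Q]
  ring

theorem relLength_inf_sup_transpose (L M N : Submodule R V) :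
    relLength (L ⊓ N ⊔ M ⊓ N) ((L ⊔ M) ⊓ N) = relLength (L ⊔ M ⊓ N) ((L ⊔ M) ⊓ (L ⊔ N)) := by
  have hinf : (L ⊔ M ⊓ N) ⊓ ((L ⊔ M) ⊓ N) = L ⊓ N ⊔ M ⊓ N := by
    rw [← inf_assoc, inf_eq_left.2 (sup_le_sup_left inf_le_left L), sup_comm L,
      sup_inf_assoc_of_le L inf_le_right, sup_comm]
  have hsup : (L ⊔ M ⊓ N) ⊔ (L ⊔ M) ⊓ N = (L ⊔ M) ⊓ (L ⊔ N) := by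
    rw [sup_assoc, sup_eq_right.2 (inf_le_inf_right N le_sup_right), sup_comm L,
      inf_sup_assoc_of_le N le_sup_left, sup_comm N]
  rw [← hinf, ← hsup, relLength_inf_eq_relLength_sup]

/- Both intervals are projective to the edges of the central diamond of the free modular lattice on
`L`, `M`, `N`. For `N = range d` this takes over the role of the connecting homomorphism of the
Mayer–Vietoris sequence. -/
theorem relLength_inf_sup_dual (L M N : Submodule R V) :
    relLength (L ⊓ N ⊔ M ⊓ N) ((L ⊔ M) ⊓ N) = relLength (L ⊓ M ⊔ N) ((L ⊔ N) ⊓ (M ⊔ N)) :=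
  calc relLength (L ⊓ N ⊔ M ⊓ N) ((L ⊔ M) ⊓ N)
      = relLength (L ⊔ M ⊓ N) ((L ⊔ M) ⊓ (L ⊔ N)) := relLength_inf_sup_transpose L M N
    _ = relLength (L ⊔ N ⊓ M) ((L ⊔ N) ⊓ (L ⊔ M)) := by rw [inf_comm M, inf_comm (L ⊔ M)]
    _ = relLength (L ⊓ M ⊔ N ⊓ M) ((L ⊔ N) ⊓ M) := (relLength_inf_sup_transpose L N M).symm
    _ = relLength (N ⊓ M ⊔ L ⊓ M) ((N ⊔ L) ⊓ M) := by rw [sup_comm (L ⊓ M), sup_comm L]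
    _ = relLength (N ⊔ L ⊓ M) ((N ⊔ L) ⊓ (N ⊔ M)) := relLength_inf_sup_transpose N L M
    _ = relLength (L ⊓ M ⊔ N) ((L ⊔ N) ⊓ (M ⊔ N)) := by
      rw [sup_comm N, sup_comm N, sup_comm N]

end RelativeLength

section RelativeComplex

variable {R : Type*} [Ring R] {C : ℕ → Type*} [∀ q, AddCommGroup (C q)] [∀ q, Module R (C q)]

/-- The relative cocycles of the cochain complex `(C, d)` modulo a family `N` of submodules: the
cochains whose coboundary lies in `N`. -/
def relCocycles (d : ∀ q, C q →ₗ[R] C (q + 1)) (N : ∀ q, Submodule R (C q)) :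
    ∀ q, Submodule R (C q) :=
  fun q => (N (q + 1)).comap (d q)

/-- The relative coboundaries of the cochain complex `(C, d)` modulo a family `N` of submodules:
the coboundaries up to elements of `N`. -/
def relCoboundaries (d : ∀ q, C q →ₗ[R] C (q + 1)) (N : ∀ q, Submodule R (C q)) :
    ∀ q, Submodule R (C q)
  | 0 => N 0
  | q + 1 => N (q + 1) ⊔ LinearMap.range (d q)

/-- The length of the `q`-th cohomology module of the quotient complex `C / N`, written as a
quotient of submodules of `C q` so that the quotient complex need not be formed. -/
noncomputable def relCohomologyLength (d : ∀ q, C q →ₗ[R] C (q + 1)) (N : ∀ q, Submodule R (C q))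
    (q : ℕ) : ℕ∞ :=
  relLength (relCoboundaries d N q) (relCocycles d N q)

variable {d : ∀ q, C q →ₗ[R] C (q + 1)} {N M : ∀ q, Submodule R (C q)}

theorem relCocycles_mono (hNM : N ≤ M) : relCocycles d N ≤ relCocycles d M :=
  fun q => Submodule.comap_mono (hNM (q + 1))

theorem relCoboundaries_mono (hNM : N ≤ M) : relCoboundaries d N ≤ relCoboundaries d M
  | 0 => hNM 0
  | q + 1 => sup_le_sup_right (hNM (q + 1)) _

theorem relCoboundaries_le_relCocycles (hd : ∀ q c, d (q + 1) (d q c) = 0)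
    (hN : N ≤ relCocycles d N) : relCoboundaries d N ≤ relCocycles d N
  | 0 => hN 0
  | q + 1 => by
    refine sup_le (hN (q + 1)) ?_
    rintro _ ⟨x, rfl⟩
    simp [relCocycles, hd]

theorem relCoboundaries_sup :
    relCoboundaries d (N ⊔ M) = relCoboundaries d N ⊔ relCoboundaries d M := by
  funext q
  cases q with
  | zero => rfl
  | succ q => exact sup_sup_distrib_right _ _ _

theorem relLength_relCocycles_sup (q : ℕ) :
    relLength ((relCocycles d N ⊔ relCocycles d M) q) (relCocycles d (N ⊔ M) q) =
      relLength (relCoboundaries d (N ⊓ M) (q + 1))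
        ((relCoboundaries d N ⊓ relCoboundaries d M) (q + 1)) := by
  have hker : LinearMap.ker (d q) ≤ (relCocycles d N ⊔ relCocycles d M) q :=
    le_sup_of_le_left (Submodule.comap_mono bot_le)
  rw [← relLength_map (d q) hker]
  simp only [relCocycles, Pi.sup_apply, Submodule.map_sup, Submodule.map_comap_eq,
    inf_comm (LinearMap.range (d q))]
  exact relLength_inf_sup_dual (N (q + 1)) (M (q + 1)) (LinearMap.range (d q))

theorem relCoboundaries_sup_le_relCocycles_sup (hd : ∀ q c, d (q + 1) (d q c) = 0)
    (hN : N ≤ relCocycles d N) (hM : M ≤ relCocycles d M) :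
    relCoboundaries d (N ⊔ M) ≤ relCocycles d N ⊔ relCocycles d M :=
  relCoboundaries_sup.trans_le
    (sup_le_sup (relCoboundaries_le_relCocycles hd hN) (relCoboundaries_le_relCocycles hd hM))

theorem relCoboundaries_inf (hd : ∀ q c, d (q + 1) (d q c) = 0)
    (hN : N ≤ relCocycles d N) (hM : M ≤ relCocycles d M)
    (hacyclic : relCocycles d (N ⊔ M) ≤ relCoboundaries d (N ⊔ M)) :
    relCoboundaries d (N ⊓ M) = relCoboundaries d N ⊓ relCoboundaries d M := by
  refine le_antisymm
    (le_inf (relCoboundaries_mono inf_le_left) (relCoboundaries_mono inf_le_right)) fun q => ?_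
  cases q with
  | zero => exact le_rfl
  | succ q =>
    rw [← relLength_eq_zero_iff, ← relLength_relCocycles_sup, relLength_eq_zero_iff]
    exact (hacyclic.trans (relCoboundaries_sup_le_relCocycles_sup hd hN hM)) q

end RelativeComplex

section AlternatingSum

/-- The lengths `h q` are finite, almost all of them vanish, and their alternating sum is `e`. -/
def HasAlternatingSum (h : ℕ → ℕ∞) (e : ℤ) : Prop :=
  ∃ k : ℕ →₀ ℕ, (∀ q, h q = k q) ∧ (k.sum fun q m => (-1) ^ q * (m : ℤ)) = e

namespace HasAlternatingSum

variable {a b h : ℕ → ℕ∞} {x y e e' : ℤ}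

theorem unique (he : HasAlternatingSum h e) (he' : HasAlternatingSum h e') : e = e' := by
  obtain ⟨k, hk, rfl⟩ := he
  obtain ⟨k', hk', rfl⟩ := he'
  have hkk' : k = k' := Finsupp.ext fun q => by exact_mod_cast (hk q).symm.trans (hk' q)
  rw [hkk']

theorem zero : HasAlternatingSum 0 0 :=
  ⟨0, fun _ => rfl, Finsupp.sum_zero_index⟩

theorem add (ha : HasAlternatingSum a x) (hb : HasAlternatingSum b y) :
    HasAlternatingSum (a + b) (x + y) := by
  obtain ⟨k, hk, rfl⟩ := ha
  obtain ⟨l, hl, rfl⟩ := hb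
  refine ⟨k + l, fun q => by simp [hk, hl], ?_⟩
  exact Finsupp.sum_add_index' (by simp) (by intros; push_cast; ring)

theorem exists_of_le (hh : HasAlternatingSum h e) (hle : a ≤ h) : ∃ x, HasAlternatingSum a x := by
  obtain ⟨k, hk, -⟩ := hh
  have hfin (q : ℕ) : a q ≤ k q := (hle q).trans_eq (hk q)
  refine ⟨_, Finsupp.onFinset k.support (fun q => (a q).toNat) fun q => ?_, fun q => ?_, rfl⟩
  · contrapose!
    intro hq
    have := hfin q
    simp_all
  · exact (ENat.natCast_toNat (ne_top_of_le_ne_top (ENat.natCast_ne_top _) (hfin q))).symm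

theorem of_succ (h0 : a 0 = 0) (ha : HasAlternatingSum (fun q => a (q + 1)) x) :
    HasAlternatingSum a (-x) := by
  obtain ⟨k, hk, rfl⟩ := ha
  let succ : ℕ ↪ ℕ := ⟨Nat.succ, Nat.succ_injective⟩
  refine ⟨k.embDomain succ, fun q => ?_, ?_⟩
  · cases q with
    | zero => simp [succ, h0, Finsupp.embDomain_of_notMem_range]
    | succ q => exact (hk q).trans (congrArg _ (Finsupp.embDomain_apply_self succ k q).symm)
  · rw [Finsupp.sum_embDomain, Finsupp.sum, Finsupp.sum, ← Finset.sum_neg_distrib]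
    exact Finset.sum_congr rfl fun q _ => by simp [succ, pow_succ]

end HasAlternatingSum

end AlternatingSum

section MayerVietoris

variable {R : Type*} [Ring R] {C : ℕ → Type*} [∀ q, AddCommGroup (C q)] [∀ q, Module R (C q)]
  {d : ∀ q, C q →ₗ[R] C (q + 1)} {N M : ∀ q, Submodule R (C q)} {x y z : ℤ}

theorem hasAlternatingSum_relCohomologyLength_inf (hd : ∀ q c, d (q + 1) (d q c) = 0)
    (hN : N ≤ relCocycles d N) (hM : M ≤ relCocycles d M)
    (hx : HasAlternatingSum (relCohomologyLength d N) x)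
    (hy : HasAlternatingSum (relCohomologyLength d M) y)
    (hz : HasAlternatingSum (relCohomologyLength d (N ⊔ M)) z) :
    HasAlternatingSum (relCohomologyLength d (N ⊓ M)) (x + y - z) := by
  let ker (q : ℕ) : ℕ∞ := relLength ((relCoboundaries d N ⊓ relCoboundaries d M) q)
    ((relCocycles d N ⊓ relCocycles d M) q)
  let coker (q : ℕ) : ℕ∞ := relLength ((relCoboundaries d N ⊔ relCoboundaries d M) q)
    ((relCocycles d N ⊔ relCocycles d M) q)
  let im (q : ℕ) : ℕ∞ := relLength (relCoboundaries d (N ⊓ M) q)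
    ((relCoboundaries d N ⊓ relCoboundaries d M) q)
  have hBN := relCoboundaries_le_relCocycles hd hN
  have hBM := relCoboundaries_le_relCocycles hd hM
  have hsum : relCohomologyLength d N + relCohomologyLength d M = ker + coker := funext fun q =>
    relLength_add_relLength_eq_inf_add_sup (hBN q) (hBM q)
  have hinf : relCohomologyLength d (N ⊓ M) = im + ker := funext fun q =>
    (relLength_add_relLength (le_inf (relCoboundaries_mono inf_le_left)
      (relCoboundaries_mono inf_le_right) q) (inf_le_inf hBN hBM q)).symm
  have hsup : relCohomologyLength d (N ⊔ M) = coker + fun q => im (q + 1) := funext fun q => by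
    have hle : relCocycles d N ⊔ relCocycles d M ≤ relCocycles d (N ⊔ M) :=
      sup_le (relCocycles_mono le_sup_left) (relCocycles_mono le_sup_right)
    simp only [Pi.add_apply, im, ← relLength_relCocycles_sup, coker, ← relCoboundaries_sup]
    exact (relLength_add_relLength (relCoboundaries_sup_le_relCocycles_sup hd hN hM q)
      (hle q)).symm
  have him : im 0 = 0 := relLength_eq_zero_iff.2 le_rfl
  have hxy := hsum ▸ hx.add hy
  rw [hsup] at hz
  obtain ⟨u, hu⟩ := hxy.exists_of_le (a := ker) le_self_add
  obtain ⟨v, hv⟩ := hxy.exists_of_le (a := coker) le_add_self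
  obtain ⟨w, hw⟩ := hz.exists_of_le (a := fun q => im (q + 1)) le_add_self
  have huv : u + v = x + y := (hu.add hv).unique hxy
  have hvw : v + w = z := (hv.add hw).unique hz
  rw [hinf, show x + y - z = -w + u by omega]
  exact (hw.of_succ him).add hu

end MayerVietoris

namespace AlexanderSpanier

section Cochain

/-- The `R`-valued Alexander–Spanier cochains of the set `X`, with the degree shifted by one: a
cochain of degree `q` is a function of `q` points, and degree `0` holds the augmentation. -/
abbrev Cochain (R X : Type*) (q : ℕ) : Type _ :=
  (Fin q → X) → R

variable (R X : Type*) [Ring R]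

/-- The coboundary of Alexander–Spanier cochains, the alternating sum over the omitted point. -/
def coboundary (q : ℕ) : Cochain R X q →ₗ[R] Cochain R X (q + 1) :=
  ∑ i : Fin (q + 1), (-1 : ℤ) ^ (i : ℕ) • LinearMap.funLeft R R (· ∘ i.succAbove)

variable {R X} {q : ℕ}

/-- Insertion of `x` as first point, a contracting homotopy of the cochain complex. -/
def cone (x : X) (φ : Cochain R X (q + 1)) : Cochain R X q :=
  fun t => φ (Fin.cons x t)

theorem coboundary_apply (φ : Cochain R X q) (t : Fin (q + 1) → X) :
    coboundary R X q φ t = ∑ i : Fin (q + 1), (-1 : ℤ) ^ (i : ℕ) • φ (t ∘ i.succAbove) := by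
  simp [coboundary, LinearMap.funLeft_apply]

theorem coboundary_zero_apply (φ : Cochain R X 0) (t : Fin 1 → X) :
    coboundary R X 0 φ t = φ Fin.elim0 := by
  rw [coboundary_apply, Fin.sum_univ_one, Subsingleton.elim (t ∘ Fin.succAbove 0) Fin.elim0]
  simp

theorem cone_coboundary (x : X) (φ : Cochain R X (q + 1)) :
    cone x (coboundary R X (q + 1) φ) = φ - coboundary R X q (cone x φ) := by
  ext t
  have hsucc (i : Fin (q + 1)) :
      (Fin.cons x t : Fin (q + 2) → X) ∘ i.succ.succAbove = Fin.cons x (t ∘ i.succAbove) := by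
    ext j
    cases j using Fin.cases <;> simp
  simp [cone, coboundary_apply, Fin.sum_univ_succ (n := q + 1), hsucc, pow_succ, sub_eq_add_neg]

theorem eq_zero_of_cone_eq_zero {φ : Cochain R X (q + 1)} (hφ : ∀ x, cone x φ = 0) : φ = 0 := by
  ext t
  simpa [cone] using congrFun (hφ (t 0)) (Fin.tail t)

theorem coboundary_coboundary (φ : Cochain R X q) :
    coboundary R X (q + 1) (coboundary R X q φ) = 0 := by
  refine eq_zero_of_cone_eq_zero fun x => ?_
  induction q generalizing x with
  | zero =>
    have hcone : cone x (coboundary R X 0 φ) = φ := by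
      ext t
      rw [cone, coboundary_zero_apply, Subsingleton.elim t Fin.elim0]
    rw [cone_coboundary, hcone, sub_self]
  | succ q ih =>
    have hφ : coboundary R X (q + 1) (coboundary R X q (cone x φ)) = 0 :=
      eq_zero_of_cone_eq_zero fun y => ih (cone x φ) y
    rw [cone_coboundary, cone_coboundary, map_sub, hφ, sub_zero, sub_self]

end Cochain

section VanishingNear

variable (R : Type*) {X : Type*} [Ring R] [TopologicalSpace X]

/-- The cochains that vanish near the diagonal of `A`. The quotient by them is the complex of germs
of cochains along `A`, whose cohomology is the reduced cohomology of `A` in its degrees shifted by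
one; accordingly only `0` vanishes near the diagonal in degree `0`. -/
def vanishingNear (A : Set X) : ∀ q, Submodule R (Cochain R X q)
  | 0 => ⊥
  | _ + 1 =>
    { carrier := {φ | ∀ a ∈ A, ∀ᶠ t in 𝓝 fun _ => a, φ t = 0}
      zero_mem' := fun _ _ => .of_forall fun _ => rfl
      add_mem' := fun hφ hψ a ha => by
        filter_upwards [hφ a ha, hψ a ha] with t hφt hψt
        simp [hφt, hψt]
      smul_mem' := fun r φ hφ a ha => by
        filter_upwards [hφ a ha] with t hφt
        simp [hφt] }

variable {R} {A B : Set X}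

theorem vanishingNear_le_relCocycles :
    vanishingNear R A ≤ relCocycles (coboundary R X) (vanishingNear R A)
  | 0 => bot_le
  | q + 1 => fun φ hφ a ha => by
    have hface (i : Fin (q + 2)) :
        ∀ᶠ t in 𝓝 (fun _ : Fin (q + 2) => a), φ (t ∘ i.succAbove) = 0 := by
      refine Tendsto.eventually ?_ (hφ a ha)
      exact Continuous.tendsto' (by fun_prop) _ _ rfl
    filter_upwards [eventually_all.2 hface] with t ht
    simp [coboundary_apply, ht]

theorem vanishingNear_anti (hAB : A ⊆ B) : vanishingNear R B ≤ vanishingNear R A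
  | 0 => le_rfl
  | _ + 1 => fun _ hφ a ha => hφ a (hAB ha)

theorem vanishingNear_union :
    vanishingNear R (A ∪ B) = vanishingNear R A ⊓ vanishingNear R B := by
  refine le_antisymm (le_inf (vanishingNear_anti subset_union_left)
    (vanishingNear_anti subset_union_right)) fun q => ?_
  cases q with
  | zero => exact inf_le_left
  | succ q => exact fun φ hφ a ha => ha.elim (hφ.1 a) (hφ.2 a)

theorem vanishingNear_inter [CompletelyNormalSpace X] (hA : IsClosed A) (hB : IsClosed B) :
    vanishingNear R (A ∩ B) = vanishingNear R A ⊔ vanishingNear R B := by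
  refine le_antisymm (fun q => ?_) (sup_le (vanishingNear_anti inter_subset_left)
    (vanishingNear_anti inter_subset_right))
  cases q with
  | zero => exact le_sup_left
  | succ q =>
    intro φ hφ
    obtain ⟨U, V, hU, hV, hAU, hBV, hUV⟩ : SeparatedNhds (A \ B) (B \ A) := by
      rw [separatedNhds_iff_disjoint]
      refine CompletelyNormalSpace.completely_normal ?_ ?_
      · exact disjoint_sdiff_right.mono_left (closure_minimal sdiff_subset hA)
      · exact disjoint_sdiff_left.mono_right (closure_minimal sdiff_subset hB)
    let ψ : Cochain R X (q + 1) := {t | t 0 ∈ V}.indicator φ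
    have hψA : ψ ∈ vanishingNear R A (q + 1) := fun a ha => by
      by_cases haB : a ∈ B
      · filter_upwards [hφ a ⟨ha, haB⟩] with t ht
        simp [ψ, ht]
      · have htU : ∀ᶠ t in 𝓝 (fun _ : Fin (q + 1) => a), t 0 ∈ U :=
          (continuous_apply 0).continuousAt.eventually_mem (hU.mem_nhds (hAU ⟨ha, haB⟩))
        filter_upwards [htU] with t ht
        exact indicator_of_notMem (s := {t | t 0 ∈ V}) (disjoint_left.1 hUV ht) φ
    have hψB : φ - ψ ∈ vanishingNear R B (q + 1) := fun b hb => by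
      by_cases hbA : b ∈ A
      · filter_upwards [hφ b ⟨hbA, hb⟩] with t ht
        simp [ψ, ht]
      · have htV : ∀ᶠ t in 𝓝 (fun _ : Fin (q + 1) => b), t 0 ∈ V :=
          (continuous_apply 0).continuousAt.eventually_mem (hV.mem_nhds (hBV ⟨hb, hbA⟩))
        filter_upwards [htV] with t ht
        simp [ψ, ht]
    exact add_sub_cancel ψ φ ▸ Submodule.add_mem_sup hψA hψB

theorem exists_isOpen_mem_vanishingNear {q : ℕ} {φ : Cochain R X q} (hφ : φ ∈ vanishingNear R A q) :
    ∃ U, IsOpen U ∧ A ⊆ U ∧ φ ∈ vanishingNear R U q := by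
  cases q with
  | zero => exact ⟨univ, isOpen_univ, subset_univ A, hφ⟩
  | succ q =>
    have hdiag : Continuous fun (a : X) (_ : Fin (q + 1)) => a := by fun_prop
    exact ⟨_, isOpen_setOfPred_eventually_nhds.preimage hdiag, hφ, fun a ha => ha⟩

theorem exists_isOpen_mem_relCoboundaries {q : ℕ} {φ : Cochain R X q}
    (hφ : φ ∈ relCoboundaries (coboundary R X) (vanishingNear R A) q) :
    ∃ U, IsOpen U ∧ A ⊆ U ∧ φ ∈ relCoboundaries (coboundary R X) (vanishingNear R U) q := by
  cases q with
  | zero => exact exists_isOpen_mem_vanishingNear hφ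
  | succ q =>
    obtain ⟨ψ, hψ, θ, hθ, rfl⟩ := Submodule.mem_sup.1 hφ
    obtain ⟨U, hU, hAU, hψU⟩ := exists_isOpen_mem_vanishingNear hψ
    exact ⟨U, hU, hAU, Submodule.add_mem_sup hψU hθ⟩

end VanishingNear

section EulerCharacteristic

/-- The germs of cochains along `A` form an exact complex, that is, the reduced Alexander–Spanier
cohomology of `A` vanishes. -/
def IsAcyclic (R : Type*) [Ring R] {X : Type*} [TopologicalSpace X] (A : Set X) : Prop :=
  relCocycles (coboundary R X) (vanishingNear R A) ≤
    relCoboundaries (coboundary R X) (vanishingNear R A)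

/-- The Euler characteristic of the Alexander–Spanier cohomology of `A` is defined and equal to
`e`. The alternating sum of the germ complex is `1 - e` because its cohomology is reduced and its
degrees are shifted by one. -/
def HasEulerChar (R : Type*) [Ring R] {X : Type*} [TopologicalSpace X] (A : Set X) (e : ℤ) : Prop :=
  HasAlternatingSum (relCohomologyLength (coboundary R X) (vanishingNear R A)) (1 - e)

variable {R : Type*} [Ring R] {X : Type*} [TopologicalSpace X] {A B : Set X} {x y z : ℤ}

theorem HasEulerChar.unique (hx : HasEulerChar R A x) (hy : HasEulerChar R A y) : x = y :=
  sub_right_injective (HasAlternatingSum.unique hx hy)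

theorem IsAcyclic.hasEulerChar (hA : IsAcyclic R A) : HasEulerChar R A 1 := by
  have hzero : relCohomologyLength (coboundary R X) (vanishingNear R A) = 0 :=
    funext fun q => relLength_eq_zero_iff.2 (hA q)
  rw [HasEulerChar, hzero]
  exact HasAlternatingSum.zero

theorem HasEulerChar.union [CompletelyNormalSpace X] (hA : IsClosed A) (hB : IsClosed B)
    (hx : HasEulerChar R A x) (hy : HasEulerChar R B y) (hz : HasEulerChar R (A ∩ B) z) :
    HasEulerChar R (A ∪ B) (x + y - z) := by
  rw [HasEulerChar, vanishingNear_inter hA hB] at hz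
  rw [HasEulerChar, vanishingNear_union, show 1 - (x + y - z) = 1 - x + (1 - y) - (1 - z) by ring]
  exact hasAlternatingSum_relCohomologyLength_inf (fun _ => coboundary_coboundary)
    vanishingNear_le_relCocycles vanishingNear_le_relCocycles hx hy hz

theorem relCoboundaries_vanishingNear_union [CompletelyNormalSpace X] (hA : IsClosed A)
    (hB : IsClosed B) (hAB : IsAcyclic R (A ∩ B)) :
    relCoboundaries (coboundary R X) (vanishingNear R (A ∪ B)) =
      relCoboundaries (coboundary R X) (vanishingNear R A) ⊓
        relCoboundaries (coboundary R X) (vanishingNear R B) := by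
  rw [IsAcyclic, vanishingNear_inter hA hB] at hAB
  rw [vanishingNear_union]
  exact relCoboundaries_inf (fun _ => coboundary_coboundary)
    vanishingNear_le_relCocycles vanishingNear_le_relCocycles hAB

theorem isAcyclic_singleton (x : X) : IsAcyclic R ({x} : Set X) := by
  intro q φ hφ
  cases q with
  | zero =>
    obtain ⟨t, ht⟩ := (hφ x rfl).exists
    rw [coboundary_zero_apply] at ht
    exact funext fun t => Subsingleton.elim t Fin.elim0 ▸ ht
  | succ q =>
    refine Submodule.mem_sup.2 ⟨cone x (coboundary R X (q + 1) φ), ?_,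
      coboundary R X q (cone x φ), LinearMap.mem_range_self _ _, by simp [cone_coboundary]⟩
    rintro _ rfl
    refine Tendsto.eventually (f := fun t : Fin (q + 1) → X => (Fin.cons _ t : Fin (q + 2) → X))
      (Continuous.tendsto' (by fun_prop) _ _ ?_) (hφ _ rfl)
    ext j
    cases j using Fin.cases <;> rfl

theorem hasEulerChar_empty (k : Type*) [DivisionRing k] (X : Type*) [TopologicalSpace X] :
    HasEulerChar k (∅ : Set X) 0 := by
  have hdeg : ∀ q, vanishingNear k (∅ : Set X) (q + 1) = ⊤ := fun q =>
    eq_top_iff.2 fun _ _ _ => False.elim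
  refine ⟨Finsupp.single 0 1, fun q => ?_, by simp⟩
  cases q with
  | zero =>
    have hcocycles : relCocycles (coboundary k X) (vanishingNear k (∅ : Set X)) 0 = ⊤ := by
      rw [relCocycles, hdeg, Submodule.comap_top]
    rw [relCohomologyLength, hcocycles, Finsupp.single_eq_same, Nat.cast_one]
    exact relLength_bot_top.trans
      ((LinearEquiv.funUnique _ k k).length_eq.trans (Module.length_eq_one k k))
  | succ q =>
    simp [relCohomologyLength, relLength_eq_zero_iff, relCoboundaries, hdeg]

end EulerCharacteristic

section Complex

variable {X : Type*} {V : Type*} [DecidableEq V] {L M : Finset (Finset V)} {s : Finset V}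

theorem sum_powerset_erase_empty_neg_one_pow (hs : s.Nonempty) :
    ∑ t ∈ s.powerset.erase ∅, (-1 : ℤ) ^ (t.card + 1) = 1 := by
  have hsum := Finset.sum_powerset_neg_one_pow_card_of_nonempty hs
  rw [← Finset.add_sum_erase _ _ (Finset.empty_mem_powerset s)] at hsum
  simp only [pow_succ, mul_neg_one, Finset.sum_neg_distrib]
  simpa using (neg_eq_of_add_eq_zero_left hsum)

theorem isRelLowerSet_powerset_erase_empty :
    IsRelLowerSet (s.powerset.erase ∅ : Set (Finset V)) Finset.Nonempty := by
  intro t ht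
  simp only [Finset.coe_erase, Finset.coe_powerset] at ht ⊢
  exact ⟨Finset.nonempty_iff_ne_empty.2 ht.2,
    fun u hut hu => ⟨(Finset.coe_subset.2 hut).trans ht.1, hu.ne_empty⟩⟩

theorem isRelLowerSet_erase_of_maximal (hL : IsRelLowerSet (L : Set (Finset V)) Finset.Nonempty)
    (hs : Maximal (· ∈ L) s) :
    IsRelLowerSet (L.erase s : Set (Finset V)) Finset.Nonempty := by
  intro t ht
  obtain ⟨hts, htL⟩ := Finset.mem_erase.1 ht
  refine ⟨(hL htL).1, fun u hut hu => Finset.mem_erase.2 ⟨?_, (hL htL).2 hut hu⟩⟩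
  rintro rfl
  exact hts (hs.eq_of_ge htL hut)

theorem biUnion_inter_biUnion {A : Finset V → Set X}
    (hL : IsRelLowerSet (L : Set (Finset V)) Finset.Nonempty)
    (hM : IsRelLowerSet (M : Set (Finset V)) Finset.Nonempty) (hempty : A ∅ = ∅)
    (hinter : ∀ s ∈ L, ∀ t ∈ M, A s ∩ A t = A (s ∩ t)) :
    (⋃ s ∈ L, A s) ∩ ⋃ t ∈ M, A t = ⋃ s ∈ L ∩ M, A s := by
  refine Subset.antisymm ?_ (subset_inter
    (biUnion_subset_biUnion_left fun s hs => (Finset.mem_inter.1 hs).1)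
    (biUnion_subset_biUnion_left fun s hs => (Finset.mem_inter.1 hs).2))
  rintro x ⟨hxL, hxM⟩
  obtain ⟨s, hs, hxs⟩ := mem_iUnion₂.1 hxL
  obtain ⟨t, ht, hxt⟩ := mem_iUnion₂.1 hxM
  have hx : x ∈ A (s ∩ t) := hinter s hs t ht ▸ ⟨hxs, hxt⟩
  have hne : (s ∩ t).Nonempty := by
    rw [Finset.nonempty_iff_ne_empty]
    intro hst
    simp [hst, hempty] at hx
  exact mem_iUnion₂.2 ⟨s ∩ t, Finset.mem_inter.2
    ⟨(hL hs).2 Finset.inter_subset_left hne, (hM ht).2 Finset.inter_subset_right hne⟩, hx⟩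

theorem biUnion_powerset_erase_empty {A : Finset V → Set X} (hs : s.Nonempty)
    (hmono : ∀ t ⊆ s, t.Nonempty → A t ⊆ A s) : ⋃ t ∈ s.powerset.erase ∅, A t = A s := by
  refine Subset.antisymm (iUnion₂_subset fun t ht => ?_) (subset_biUnion_of_mem (u := A) ?_)
  · obtain ⟨hne, hts⟩ := Finset.mem_erase.1 ht
    exact hmono t (Finset.mem_powerset.1 hts) (Finset.nonempty_iff_ne_empty.2 hne)
  · simp [hs.ne_empty]

theorem erase_union_powerset_erase_empty (hL : IsRelLowerSet (L : Set (Finset V)) Finset.Nonempty)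
    (hs : s ∈ L) : L.erase s ∪ s.powerset.erase ∅ = L := by
  refine Finset.Subset.antisymm (Finset.union_subset (Finset.erase_subset _ _) fun t ht => ?_)
    fun t ht => ?_
  · obtain ⟨hne, hts⟩ := Finset.mem_erase.1 ht
    exact (hL hs).2 (Finset.mem_powerset.1 hts) (Finset.nonempty_iff_ne_empty.2 hne)
  · by_cases hts : t = s
    · simp [hts, (hL hs).1.ne_empty]
    · exact Finset.mem_union_left _ (Finset.mem_erase_of_ne_of_mem hts ht)

theorem hasEulerChar_biUnion [TopologicalSpace X] [CompletelyNormalSpace X] {k : Type*}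
    [DivisionRing k] {A : Finset V → Set X}
    (hL : IsRelLowerSet (L : Set (Finset V)) Finset.Nonempty)
    (hclosed : ∀ s ∈ L, IsClosed (A s)) (hacyclic : ∀ s ∈ L, IsAcyclic k (A s))
    (hempty : A ∅ = ∅) (hinter : ∀ s ∈ L, ∀ t ∈ L, A s ∩ A t = A (s ∩ t)) :
    HasEulerChar k (⋃ s ∈ L, A s) (∑ s ∈ L, (-1) ^ (s.card + 1)) := by
  induction L using Finset.strongInduction with | _ L ih =>
  obtain rfl | hne := L.eq_empty_or_nonempty
  · simpa using hasEulerChar_empty k X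
  obtain ⟨s, hs⟩ := L.exists_maximal hne
  obtain ⟨hsne, hsub⟩ := hL hs.prop
  set L' := L.erase s
  set Δ := s.powerset.erase ∅
  have hL' : IsRelLowerSet (L' : Set (Finset V)) Finset.Nonempty :=
    isRelLowerSet_erase_of_maximal hL hs
  have hΔ : IsRelLowerSet (Δ : Set (Finset V)) Finset.Nonempty := isRelLowerSet_powerset_erase_empty
  have hunion : L' ∪ Δ = L := erase_union_powerset_erase_empty hL hs.prop
  have hL'L : L' ⊂ L := Finset.erase_ssubset hs.prop
  have hΔL : Δ ⊆ L := hunion ▸ Finset.subset_union_right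
  have hAΔ : ⋃ t ∈ Δ, A t = A s := biUnion_powerset_erase_empty hsne fun t hts ht => by
    rw [← Finset.inter_eq_right.2 hts, ← hinter s hs.prop t (hsub hts ht)]
    exact inter_subset_left
  have hAinter : (⋃ t ∈ L', A t) ∩ A s = ⋃ t ∈ L' ∩ Δ, A t := by
    rw [← hAΔ]
    exact biUnion_inter_biUnion hL' hΔ hempty fun t ht u hu => hinter t (hL'L.1 ht) u (hΔL hu)
  have hsum : ∑ t ∈ L, (-1 : ℤ) ^ (t.card + 1) =
      ∑ t ∈ L', (-1) ^ (t.card + 1) + 1 - ∑ t ∈ L' ∩ Δ, (-1) ^ (t.card + 1) := by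
    rw [eq_sub_iff_add_eq, ← hunion, Finset.sum_union_inter,
      sum_powerset_erase_empty_neg_one_pow hsne]
  have ih' {M : Finset (Finset V)} (hML : M ⊂ L)
      (hM : IsRelLowerSet (M : Set (Finset V)) Finset.Nonempty) :
      HasEulerChar k (⋃ t ∈ M, A t) (∑ t ∈ M, (-1) ^ (t.card + 1)) :=
    ih M hML hM (fun t ht => hclosed t (hML.1 ht)) (fun t ht => hacyclic t (hML.1 ht))
      fun t ht u hu => hinter t (hML.1 ht) u (hML.1 hu)
  rw [hsum, ← hunion, Finset.set_biUnion_union, hAΔ]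
  refine HasEulerChar.union (isClosed_biUnion_finset fun t ht => hclosed t (hL'L.1 ht))
    (hclosed s hs.prop) (ih' hL'L hL') (hacyclic s hs.prop).hasEulerChar (hAinter ▸ ih' ?_ ?_)
  · exact (Finset.inter_subset_left).trans_ssubset hL'L
  · simpa using hL'.inter hΔ

end Complex

theorem Icc_induction {P : ℝ → ℝ → Prop} {a b : ℝ} (hab : a ≤ b)
    (hlocal : ∀ c ∈ Icc a b, ∃ V ∈ 𝓝 c, ∀ r s, Icc r s ⊆ V → P r s)
    (hglue : ∀ r s t, s ∈ Icc a b → r ≤ s → s ≤ t → P r s → P s t → P r t) : P a b := by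
  choose! V hV hPV using hlocal
  obtain ⟨t, ht0, htmono, ⟨m, htm⟩, htV⟩ := exists_monotone_Icc_subset_open_cover_Icc hab
    (c := fun c : Icc a b => Subtype.val ⁻¹' interior (V c))
    (fun c => isOpen_interior.preimage continuous_subtype_val)
    (fun c _ => mem_iUnion.2 ⟨c, mem_interior_iff_mem_nhds.2 (hV c c.2)⟩)
  have hPstep : ∀ n, P (t n) (t (n + 1)) := by
    intro n
    obtain ⟨c, hc⟩ := htV n
    refine hPV c c.2 _ _ fun x hx => interior_subset (hc (a := ⟨x, ?_⟩) hx)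
    exact ⟨(t n).2.1.trans hx.1, hx.2.trans (t (n + 1)).2.2⟩
  have hP : ∀ n, P a (t (n + 1)) := by
    intro n
    induction n with
    | zero => simpa [ht0] using hPstep 0
    | succ n ih =>
      exact hglue _ _ _ (t (n + 1)).2 (t (n + 1)).2.1 (htmono (Nat.le_succ _)) ih (hPstep _)
  simpa [htm (m + 1) (Nat.le_succ m)] using hP m

section Acyclic

variable {R : Type*} [Ring R] {X : Type*} [TopologicalSpace X] [T5Space X] {K A : Set X}

theorem isAcyclic_of_fibers (hK : IsCompact K) {f : X → ℝ} (hf : Continuous f) {a b : ℝ}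
    (hab : a ≤ b) (hmaps : MapsTo f K (Icc a b))
    (hfiber : ∀ c ∈ Icc a b, IsAcyclic R (K ∩ f ⁻¹' {c})) : IsAcyclic R K := by
  have hclosed (r s : ℝ) : IsClosed (K ∩ f ⁻¹' Icc r s) :=
    hK.isClosed.inter (isClosed_Icc.preimage hf)
  intro q φ hφ
  suffices h : φ ∈ relCoboundaries (coboundary R X) (vanishingNear R (K ∩ f ⁻¹' Icc a b)) q by
    rwa [inter_eq_left.2 (show K ⊆ f ⁻¹' Icc a b from hmaps)] at h
  refine Icc_induction (P := fun r s =>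
    φ ∈ relCoboundaries (coboundary R X) (vanishingNear R (K ∩ f ⁻¹' Icc r s)) q) hab ?_ ?_
  · intro c hc
    obtain ⟨U, hU, hcU, hφU⟩ := exists_isOpen_mem_relCoboundaries
      (hfiber c hc q (relCocycles_mono (vanishingNear_anti inter_subset_left) q hφ))
    refine ⟨(f '' (K \ U))ᶜ, ?_, fun r s hrs => ?_⟩
    · refine ((hK.diff hU).image hf).isClosed.isOpen_compl.mem_nhds ?_
      rintro ⟨x, hx, hxc⟩
      exact hx.2 (hcU ⟨hx.1, hxc⟩)
    · refine relCoboundaries_mono (vanishingNear_anti ?_) q hφU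
      rintro x ⟨hxK, hxrs⟩
      by_contra hxU
      exact hrs hxrs ⟨x, ⟨hxK, hxU⟩, rfl⟩
  · intro r s t hs hrs hst hφr hφs
    have hinter : (K ∩ f ⁻¹' Icc r s) ∩ (K ∩ f ⁻¹' Icc s t) = K ∩ f ⁻¹' {s} := by
      rw [← inter_inter_distrib_left, ← preimage_inter, Icc_inter_Icc_eq_singleton hrs hst]
    rw [← Icc_union_Icc_eq_Icc hrs hst, preimage_union, inter_union_distrib_left,
      relCoboundaries_vanishingNear_union (hclosed r s) (hclosed s t) (hinter ▸ hfiber s hs)]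
    exact ⟨hφr, hφs⟩

theorem isAcyclic_of_convex_image_of_separating {ι : Type*} {g : X → ι → ℝ}
    (hg : Continuous g) (J : Finset ι) (hA : IsCompact A) (hne : A.Nonempty)
    (hconvex : Convex ℝ (g '' A))
    (hsep : ∀ x ∈ A, ∀ y ∈ A, (∀ j ∈ J, g x j = g y j) → x = y) : IsAcyclic R A := by
  classical
  induction J using Finset.induction_on generalizing A with
  | empty =>
    obtain ⟨x, rfl⟩ := exists_eq_singleton_iff_nonempty_subsingleton.2
      ⟨hne, fun x hx y hy => hsep x hx y hy (by simp)⟩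
    exact isAcyclic_singleton x
  | insert i J _ ih =>
    let p : (ι → ℝ) →ₗ[ℝ] ℝ := LinearMap.proj i
    have hpg : Continuous (p ∘ g) := (continuous_apply i).comp hg
    have hpre : IsPreconnected (p ∘ g '' A) := by
      rw [image_comp]
      exact (hconvex.linear_image p).isPreconnected
    have hIcc := eq_Icc_of_connected_compact ⟨hne.image _, hpre⟩ (hA.image hpg)
    have hab := nonempty_Icc.1 (hIcc ▸ hne.image _)
    refine isAcyclic_of_fibers hA hpg hab (mapsTo_iff_image_subset.2 hIcc.subset) fun c hc =>
      ih (hA.inter_right (isClosed_singleton.preimage hpg)) (hIcc.superset hc) ?_ ?_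
    · rw [preimage_comp, image_inter_preimage]
      exact hconvex.inter ((convex_singleton c).linear_preimage p)
    · rintro x ⟨hx, rfl⟩ y ⟨hy, hyc⟩ hxy
      exact hsep x hx y hy (Finset.forall_mem_insert .. |>.2 ⟨hyc.symm, hxy⟩)

theorem isAcyclic_of_convex_image {ι : Type*} [Finite ι] {g : X → ι → ℝ} (hg : Continuous g)
    (hA : IsCompact A) (hne : A.Nonempty) (hinj : InjOn g A) (hconvex : Convex ℝ (g '' A)) :
    IsAcyclic R A := by
  have := Fintype.ofFinite ι
  exact isAcyclic_of_convex_image_of_separating hg Finset.univ hA hne hconvex fun x hx y hy hxy =>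
    hinj hx hy (funext fun j => hxy j (Finset.mem_univ j))

end Acyclic

section Simplicial

/-- The Euler characteristic of a finite simplicial complex: a face with `n + 1` vertices has
dimension `n` and is counted with the sign `(-1) ^ n`. -/
noncomputable def simplicialEulerChar {E : Type*} [AddCommGroup E] [Module ℝ E]
    (K : SimplicialComplex ℝ E) : ℤ :=
  ∑ᶠ s ∈ K.faces, (-1) ^ (s.card + 1)

theorem simplicialEulerChar_eq_sum_faceCount {E : Type*} [AddCommGroup E] [Module ℝ E]
    {K : SimplicialComplex ℝ E} (hfin : K.faces.Finite) {m : ℕ}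
    (hdim : ∀ s ∈ K.faces, s.card ≤ m) :
    simplicialEulerChar K = ∑ i ∈ Finset.range m, (-1) ^ i * (faceCount K.faces i : ℤ) := by
  have hpos : ∀ s ∈ K.faces, 0 < s.card := fun s hs => (K.nonempty_of_mem_faces hs).card_pos
  have hcard : ∀ s ∈ hfin.toFinset, s.card - 1 ∈ Finset.range m := fun s hs => by
    have hs := hfin.mem_toFinset.1 hs
    have := hdim s hs
    have := hpos s hs
    exact Finset.mem_range.2 (by omega)
  have hiff {s : Finset E} {i : ℕ} :
      s ∈ hfin.toFinset ∧ s.card - 1 = i ↔ s ∈ K.faces ∧ s.card = i + 1 := by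
    rw [hfin.mem_toFinset]
    refine and_congr_right fun hs => ?_
    have := hpos s hs
    omega
  rw [simplicialEulerChar, finsum_mem_eq_finite_toFinset_sum _ hfin,
    ← Finset.sum_fiberwise_of_maps_to hcard]
  refine Finset.sum_congr rfl fun i _ => ?_
  have hfiber : faceCount K.faces i = {s ∈ hfin.toFinset | s.card - 1 = i}.card := by
    rw [faceCount, ← Set.ncard_coe_finset, Finset.coe_filter]
    simp only [hiff]
  rw [hfiber, mul_comm, ← nsmul_eq_mul, ← Finset.sum_const]
  refine Finset.sum_congr rfl fun s hs => ?_
  rw [(hiff.1 (Finset.mem_filter.1 hs)).2]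
  ring

theorem space_subset_span_vertices {E : Type*} [AddCommGroup E] [Module ℝ E]
    (K : SimplicialComplex ℝ E) : K.space ⊆ Submodule.span ℝ K.vertices := by
  refine iUnion₂_subset fun s hs => convexHull_min (fun x hx => ?_) (Submodule.convex _)
  exact Submodule.subset_span (SimplicialComplex.vertices_eq (K := K) ▸ mem_biUnion hs hx)

variable {E : Type*} [AddCommGroup E] [Module ℝ E] [TopologicalSpace E] [IsTopologicalAddGroup E]
  [ContinuousSMul ℝ E] {K : SimplicialComplex ℝ E}

theorem isCompact_space (hfin : K.faces.Finite) : IsCompact K.space :=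
  hfin.isCompact_biUnion fun s _ => s.finite_toSet.isCompact_convexHull ℝ

variable [T2Space E]

theorem exists_linearMap_continuousOn_injOn (F : Submodule ℝ E) [FiniteDimensional ℝ F] :
    ∃ (ι : Type) (_ : Finite ι) (f : E →ₗ[ℝ] ι → ℝ), ContinuousOn f F ∧ InjOn f F := by
  obtain ⟨f, hf⟩ := LinearMap.exists_extend (Module.finBasis ℝ F).equivFun.toLinearMap
  have hrestrict : (F : Set E).domRestrict f = (Module.finBasis ℝ F).equivFun :=
    funext (LinearMap.congr_fun hf)
  refine ⟨_, inferInstance, f, ?_, ?_⟩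
  · rw [continuousOn_iff_continuous_domRestrict, hrestrict]
    exact LinearMap.continuous_of_finiteDimensional (Module.finBasis ℝ F).equivFun.toLinearMap
  · rw [injOn_iff_injective, hrestrict]
    exact LinearEquiv.injective _

theorem exists_linearMap_continuousOn_injOn_space (hfin : K.faces.Finite) :
    ∃ (ι : Type) (_ : Finite ι) (f : E →ₗ[ℝ] ι → ℝ),
      ContinuousOn f K.space ∧ InjOn f K.space := by
  have hvertices : K.vertices.Finite := by
    rw [SimplicialComplex.vertices_eq]
    exact hfin.biUnion fun s _ => s.finite_toSet
  have : FiniteDimensional ℝ (Submodule.span ℝ K.vertices) :=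
    FiniteDimensional.span_of_finite ℝ hvertices
  obtain ⟨ι, hι, f, hcont, hinj⟩ :=
    exists_linearMap_continuousOn_injOn (Submodule.span ℝ K.vertices)
  exact ⟨ι, hι, f, hcont.mono (space_subset_span_vertices K),
    hinj.mono (space_subset_span_vertices K)⟩

theorem isAcyclic_preimage_convexHull {R : Type*} [Ring R] {X : Type*} [TopologicalSpace X]
    [CompactSpace X] [T5Space X] {ι : Type*} [Finite ι] {g : X → E} (hg : Continuous g)
    {f : E →ₗ[ℝ] ι → ℝ} (hfg : Continuous (f ∘ g)) (hinj : Function.Injective (f ∘ g))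
    {s : Set E} (hfin : s.Finite) (hne : s.Nonempty) (hrange : convexHull ℝ s ⊆ range g) :
    IsAcyclic R (g ⁻¹' convexHull ℝ s) := by
  have himage : g '' (g ⁻¹' convexHull ℝ s) = convexHull ℝ s :=
    image_preimage_eq_of_subset hrange
  have hclosed : IsClosed (g ⁻¹' convexHull ℝ s) := (hfin.isClosed_convexHull ℝ).preimage hg
  refine isAcyclic_of_convex_image hfg hclosed.isCompact ?_ hinj.injOn ?_
  · rwa [← image_nonempty (f := g), himage, convexHull_nonempty_iff]
  · rw [image_comp, himage]
    exact (convex_convexHull ℝ s).linear_image f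

theorem hasEulerChar_univ_of_range_eq_space (k : Type*) [DivisionRing k]
    (hfin : K.faces.Finite) {X : Type*} [TopologicalSpace X] [CompactSpace X]
    {g : X → E} (hg : Continuous g) (hginj : Function.Injective g) (hrange : range g = K.space) :
    HasEulerChar k (univ : Set X) (simplicialEulerChar K) := by
  classical
  obtain ⟨ι, _, f, hfcont, hfinj⟩ := exists_linearMap_continuousOn_injOn_space hfin
  rw [← hrange] at hfcont hfinj
  have hfg : Continuous (f ∘ g) := hfcont.comp_continuous hg mem_range_self
  have hfginj : Function.Injective (f ∘ g) := fun x y hxy =>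
    hginj (hfinj (mem_range_self x) (mem_range_self y) hxy)
  have : T5Space X := (hfg.isClosedEmbedding hfginj).isEmbedding.t5Space
  have hclosed (s : Finset E) : IsClosed (g ⁻¹' convexHull ℝ (s : Set E)) :=
    (s.finite_toSet.isClosed_convexHull ℝ).preimage hg
  have hunion : ⋃ s ∈ hfin.toFinset, g ⁻¹' convexHull ℝ (s : Set E) = univ := by
    simp only [hfin.mem_toFinset, ← preimage_iUnion₂]
    exact preimage_eq_univ_iff.2 hrange.subset
  have hacyclic : ∀ s ∈ K.faces, IsAcyclic k (g ⁻¹' convexHull ℝ (s : Set E)) := fun s hs =>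
    isAcyclic_preimage_convexHull hg hfg hfginj s.finite_toSet (K.nonempty_of_mem_faces hs)
      (hrange ▸ K.convexHull_subset_space hs)
  have hlower : IsRelLowerSet (hfin.toFinset : Set (Finset E)) Finset.Nonempty := by
    rw [hfin.coe_toFinset]
    exact K.isRelLowerSet_faces
  have hinter : ∀ s ∈ K.faces, ∀ t ∈ K.faces, g ⁻¹' convexHull ℝ (s : Set E) ∩
      g ⁻¹' convexHull ℝ (t : Set E) = g ⁻¹' convexHull ℝ ((s ∩ t : Finset E) : Set E) := by
    intro s hs t ht
    rw [← preimage_inter, SimplicialComplex.convexHull_inter_convexHull hs ht, Finset.coe_inter]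
  rw [← hunion, simplicialEulerChar, finsum_mem_eq_finite_toFinset_sum _ hfin]
  exact hasEulerChar_biUnion hlower (fun s _ => hclosed s)
    (fun s hs => hacyclic s (hfin.mem_toFinset.1 hs)) (by simp) fun s hs t ht =>
      hinter s (hfin.mem_toFinset.1 hs) t (hfin.mem_toFinset.1 ht)

theorem hasEulerChar_univ (k : Type*) [DivisionRing k] (hfin : K.faces.Finite) {X : Type*}
    [TopologicalSpace X] (e : X ≃ₜ K.space) :
    HasEulerChar k (univ : Set X) (simplicialEulerChar K) := by
  have := isCompact_iff_compactSpace.1 (isCompact_space hfin)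
  have := e.symm.compactSpace
  refine hasEulerChar_univ_of_range_eq_space k hfin (continuous_subtype_val.comp e.continuous)
    (Subtype.val_injective.comp e.injective) ?_
  rw [e.surjective.range_comp, Subtype.range_coe]

end Simplicial

end AlexanderSpanier

open AlexanderSpanier

theorem euler_char_topological_invariance_general {E E' : Type*}
    [AddCommGroup E] [Module ℝ E] [TopologicalSpace E] [IsTopologicalAddGroup E]
    [ContinuousSMul ℝ E] [T2Space E]
    [AddCommGroup E'] [Module ℝ E'] [TopologicalSpace E'] [IsTopologicalAddGroup E']
    [ContinuousSMul ℝ E'] [T2Space E']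
    {T : SimplicialComplex ℝ E} {T' : SimplicialComplex ℝ E'}
    (hfin : T.faces.Finite) (hfin' : T'.faces.Finite) (hhomeo : Nonempty (T.space ≃ₜ T'.space)) :
    simplicialEulerChar T = simplicialEulerChar T' := by
  obtain ⟨e⟩ := hhomeo
  exact (hasEulerChar_univ ℚ hfin (Homeomorph.refl _)).unique (hasEulerChar_univ ℚ hfin' e)

/-- Topological invariance of the Euler characteristic for surfaces: if two finite
2-dimensional simplicial complexes triangulate homeomorphic compact surfaces
(compact 2-manifolds), they have the same alternating sum `n₀ - n₁ + n₂`. -/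
theorem euler_char_topological_invariance (n n' : ℕ)
    (T : SimplicialComplex ℝ (EuclideanSpace ℝ (Fin n)))
    (T' : SimplicialComplex ℝ (EuclideanSpace ℝ (Fin n')))
    (hfin : T.faces.Finite) (hfin' : T'.faces.Finite)
    (hdim : ∀ s ∈ T.faces, s.card ≤ 3) (hdim' : ∀ s ∈ T'.faces, s.card ≤ 3)
    (hcompact : IsCompact T.space)
    (hsurface : Nonempty (ChartedSpace (EuclideanSpace ℝ (Fin 2)) ↥T.space))
    (hhomeo : Nonempty (↥T.space ≃ₜ ↥T'.space)) :
    (faceCount T.faces 0 : ℤ) - (faceCount T.faces 1 : ℤ) + (faceCount T.faces 2 : ℤ)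
      = (faceCount T'.faces 0 : ℤ) - (faceCount T'.faces 1 : ℤ)
          + (faceCount T'.faces 2 : ℤ) := by
  have h := euler_char_topological_invariance_general hfin hfin' hhomeo
  rw [simplicialEulerChar_eq_sum_faceCount hfin hdim,
    simplicialEulerChar_eq_sum_faceCount hfin' hdim'] at h
  simpa [Finset.sum_range_succ, ← sub_eq_add_neg] using h
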